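/- Nondegeneracy of the CSQR futures elasticity matrix (Appendix, case γ ≠ κ): Let γ, κ, t, T₁, T₂ be real numbers with γ ≠ κ. Then exp(−γ·T₁)·(exp(−κ·(T₂ − t)) − exp(−γ·(T₂ − t))) = exp(−γ·T₂)·(exp(−κ·(T₁ − t)) − exp(−γ·(T₁ − t))) if and only if T₁ = T₂. -/

import Mathlib

/-!
The equation says that the matrix with rows `(exp (-γTᵢ), exp (-κ(Tᵢ - t)) - exp (-γ(Tᵢ - t)))` is
singular. Factoring `exp (-γt)` out of the first column expresses everything in the times to
maturity `Tᵢ - t`, and adding the first column to the second leaves the generalized Vandermonde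
matrix with rows `(exp (-γ(Tᵢ - t)), exp (-κ(Tᵢ - t)))`. Its determinant vanishes exactly when the
exponents of its two terms agree, that is, when `(γ - κ)(T₁ - T₂) = 0`.
-/

theorem mul_sub_eq_mul_sub_iff_mul_eq_mul {R : Type*} [NonUnitalNonAssocCommRing R] {a b c d : R} :
    a * (d - b) = b * (c - a) ↔ a * d = b * c := by
  rw [mul_sub, mul_sub, mul_comm b a, sub_left_inj]

theorem mul_add_mul_eq_mul_add_mul_iff {R : Type*} [NonUnitalNonAssocRing R] [NoZeroDivisors R]
    {a b x y : R} : a * x + b * y = a * y + b * x ↔ a = b ∨ x = y := by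
  have sub_eq_mul : a * x + b * y - (a * y + b * x) = (a - b) * (x - y) := by
    rw [sub_mul, mul_sub, mul_sub]
    abel
  rw [← sub_eq_zero, sub_eq_mul, mul_eq_zero, sub_eq_zero, sub_eq_zero]

theorem exp_mul_exp_eq_exp_mul_exp_iff {a b x y : ℝ} :
    Real.exp (a * x) * Real.exp (b * y) = Real.exp (a * y) * Real.exp (b * x) ↔
      a = b ∨ x = y := by
  rw [← Real.exp_add, ← Real.exp_add, Real.exp_eq_exp, mul_add_mul_eq_mul_add_mul_iff]

/-- Nondegeneracy of the CSQR futures elasticity matrix (case γ ≠ κ). -/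
theorem csqr_elasticity_nondegenerate
    (γ κ t T₁ T₂ : ℝ) (h : γ ≠ κ) :
    Real.exp (-(γ * T₁)) * (Real.exp (-(κ * (T₂ - t))) - Real.exp (-(γ * (T₂ - t))))
      = Real.exp (-(γ * T₂)) * (Real.exp (-(κ * (T₁ - t))) - Real.exp (-(γ * (T₁ - t))))
    ↔ T₁ = T₂ := by
  have exp_maturity (T : ℝ) :
      Real.exp (-(γ * T)) = Real.exp (-(γ * t)) * Real.exp (-(γ * (T - t))) := by
    rw [← Real.exp_add]
    ring_nf
  rw [exp_maturity T₁, exp_maturity T₂, mul_assoc, mul_assoc,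
    mul_right_inj' (Real.exp_ne_zero _), mul_sub_eq_mul_sub_iff_mul_eq_mul]
  simp only [← neg_mul]
  rw [exp_mul_exp_eq_exp_mul_exp_iff, neg_inj, or_iff_right h, sub_left_inj]
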